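/- arXiv:1610.09553 — 2 statements merged into one kernel-verified Lean document; each statement's English description precedes it below -/
import Mathlib

section
/- Let n ≥ 2 and m ≥ 1. Let g : [0,∞) → ℝ be a function whose radial extension g₀(x) = g(‖x‖) belongs to the Schwartz space 𝒮(ℝ^n), and assume ∫_{ℝ^n} g₀(x) dx ≠ 0. Let x_1,…,x_m ∈ ℝ^n be pairwise distinct, a_1,…,a_m ∈ ℝ \ {0} pairwise distinct, and likewise x'_1,…,x'_m pairwise distinct and a'_1,…,a'_m ∈ ℝ \ {0} pairwise distinct. Set f(x) = ∑_{k=1}^m a_k g(‖x − x_k‖) and f'(x) = ∑_{k=1}^m a'_k g(‖x − x'_k‖). Let Γ ⊆ ℝ^n be a set of n·m(m−1)/2 + n + 1 distinct points such that no affine hyperplane of ℝ^n contains more than n points of Γ. If for every y ∈ Γ and every t ≥ 0 one has ∫_{S^{n−1}} f(y + tθ) dσ(θ) = ∫_{S^{n−1}} f'(y + tθ) dσ(θ) (where σ is the surface measure on the unit sphere S^{n−1}), then there exists a permutation σ of {1,…,m} such that x'_k = x_{σ(k)} and a'_k = a_{σ(k)} for all k. -/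
open MeasureTheory
open scoped RealInnerProductSpace

/-!
A linear isometry exchanging two vectors of equal length shows that the spherical mean about `y`
of radius `‖z‖` of the translate `g(‖· - xₖ‖)` is the mean of `g ∘ ‖·‖` over the sphere about `z`
of radius `‖y - xₖ‖`. The data at `y` therefore say that `g ∘ ‖·‖` has the same convolution with
two weighted sums of dilates of the surface measure. Since `∫ g ∘ ‖·‖ ≠ 0`, its Fourier transform
does not vanish near `0`, so the characteristic functions of these sums agree near `0`. Their even
derivatives at `0` give `∑ aₖ ‖y - xₖ‖ ^ (2 * j) = ∑ a'ₖ ‖y - x'ₖ‖ ^ (2 * j)` for all `j`, which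
fixes the total amplitude at every distance from `y`.

If `y` lies on no bisector of two nodes `xₖ`, this matches the nodes `x` with the nodes `x'` in
a way that preserves distances to `y` and amplitudes. The amplitudes being distinct, the matching
does not depend on `y`. Each bisector contains at most `n` points of `Γ`, so more than `n` points
of `Γ` lie on none, and these are too many to lie on the bisector of two matched distinct nodes.
-/

section RandomTranslates

open Topology
open scoped FourierTransform Real

variable {E F : Type*} [NormedAddCommGroup E] [InnerProductSpace ℝ E] [FiniteDimensional ℝ E]
  [MeasurableSpace E] [BorelSpace E] [NormedAddCommGroup F]
  {Ω : Type*} [MeasurableSpace Ω] {μ : Measure Ω} [IsFiniteMeasure μ] {φ : Ω → E} {f : E → F}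

theorem integrable_prod_comp_add (hφ : Measurable φ) (hf : Integrable f) :
    Integrable (fun z : Ω × E => f (z.2 + φ z.1)) (μ.prod volume) := by
  have hshear : MeasurePreserving (fun z : Ω × E => (z.1, z.2 + φ z.1)) (μ.prod volume)
      (μ.prod volume) :=
    (MeasurePreserving.id μ).skew_product (g := fun ω x => x + φ ω)
      (measurable_snd.add (hφ.comp measurable_fst))
      (.of_forall fun ω => map_add_right_eq_self volume (φ ω))
  exact hshear.integrable_comp_of_integrable (hf.comp_snd μ)

variable [NormedSpace ℂ F]

theorem integrable_integral_comp_add (hφ : Measurable φ) (hf : Integrable f) :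
    Integrable fun x => ∫ ω, f (x + φ ω) ∂μ :=
  (integrable_prod_comp_add hφ hf).integral_prod_right

theorem fourier_comp_add_right (f : E → F) (v w : E) :
    𝓕 (fun x => f (x + v)) w = 𝐞 ⟪v, w⟫ • 𝓕 f w :=
  congrFun (VectorFourier.fourierIntegral_comp_add_right 𝐞 volume (innerₗ E) f v) w

theorem eventually_fourier_ne_zero (hf : Integrable f) (hf0 : ∫ x, f x ≠ 0) :
    ∀ᶠ w in 𝓝 0, 𝓕 f w ≠ 0 := by
  have hcont : Continuous (𝓕 f) := VectorFourier.fourierIntegral_continuous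
    Real.continuous_fourierChar continuous_inner hf
  refine hcont.continuousAt.eventually_ne ?_
  simpa [Real.fourier_eq] using hf0

variable [CompleteSpace F]

theorem fourier_integral_comp_add (hφ : Measurable φ) (hf : Integrable f) (w : E) :
    𝓕 (fun x => ∫ ω, f (x + φ ω) ∂μ) w = charFun (μ.map φ) ((2 * π) • w) • 𝓕 f w := by
  have hfi : Integrable (fun z : Ω × E => 𝐞 (-⟪z.2, w⟫) • f (z.2 + φ z.1)) (μ.prod volume) := by
    refine (integrable_prod_comp_add hφ hf).mono ?_ (.of_forall fun z => ?_)
    · exact (Real.continuous_fourierChar.comp_aestronglyMeasurable (by fun_prop)).smul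
        (integrable_prod_comp_add hφ hf).aestronglyMeasurable
    · rw [Circle.norm_smul]
  have hchar (ω : Ω) : 𝓕 (fun x => f (x + φ ω)) w =
      Complex.exp (⟪φ ω, (2 * π) • w⟫ * Complex.I) • 𝓕 f w := by
    rw [fourier_comp_add_right, Circle.smul_def, Real.fourierChar_apply, inner_smul_right]
  calc 𝓕 (fun x => ∫ ω, f (x + φ ω) ∂μ) w
      = ∫ x, ∫ ω, 𝐞 (-⟪x, w⟫) • f (x + φ ω) ∂μ := by
        simp_rw [Real.fourier_eq, Circle.smul_def, integral_smul]
    _ = ∫ ω, 𝓕 (fun x => f (x + φ ω)) w ∂μ := (integral_integral_swap hfi).symm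
    _ = charFun (μ.map φ) ((2 * π) • w) • 𝓕 f w := by
        rw [charFun_apply, integral_map hφ.aemeasurable (by fun_prop), ← integral_smul_const]
        simp_rw [hchar]

end RandomTranslates

section Moments

open Filter Topology
open scoped FourierTransform Real

variable {ι ι' : Type*} [Fintype ι] [Fintype ι']

theorem iteratedDeriv_sum_mul_charFun_mul {ν : Measure ℝ} [IsFiniteMeasure ν] {n : ℕ}
    (hν : MemLp id n ν) (c : ι → ℂ) (d : ι → ℝ) :
    iteratedDeriv n (fun s => ∑ i, c i * charFun ν (d i * s)) 0 =
      (∑ i, c i * (d i : ℂ) ^ n) * (Complex.I ^ n * ∫ u, u ^ n ∂ν) := by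
  have hdiff : ContDiff ℝ n (charFun ν) := contDiff_charFun hν
  have hterm (i : ι) : ContDiff ℝ n (fun s => charFun ν (d i * s)) := hdiff.comp (by fun_prop)
  rw [iteratedDeriv_fun_sum fun i _ => (contDiff_const.mul (hterm i)).contDiffAt, Finset.sum_mul]
  refine Finset.sum_congr rfl fun i _ => ?_
  rw [iteratedDeriv_const_mul_field, iteratedDeriv_comp_const_smul hdiff]
  simp only [mul_zero, iteratedDeriv_charFun_zero hν, Complex.real_smul, Complex.ofReal_pow]
  ring

theorem sum_mul_pow_eq_of_eventuallyEq_charFun {ν : Measure ℝ} [IsFiniteMeasure ν] {n : ℕ}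
    (hν : MemLp id n ν) (hn : ∫ u, u ^ n ∂ν ≠ 0) {c : ι → ℂ} {c' : ι' → ℂ} {d : ι → ℝ}
    {d' : ι' → ℝ}
    (h : (fun s => ∑ i, c i * charFun ν (d i * s)) =ᶠ[𝓝 0]
      fun s => ∑ i, c' i * charFun ν (d' i * s)) :
    ∑ i, c i * (d i : ℂ) ^ n = ∑ i, c' i * (d' i : ℂ) ^ n := by
  have hderiv := h.iteratedDeriv_eq n
  rw [iteratedDeriv_sum_mul_charFun_mul hν, iteratedDeriv_sum_mul_charFun_mul hν] at hderiv
  exact mul_right_cancel₀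
    (mul_ne_zero (pow_ne_zero _ Complex.I_ne_zero) (Complex.ofReal_ne_zero.2 hn)) hderiv

variable {E F : Type*} [NormedAddCommGroup E] [InnerProductSpace ℝ E] [FiniteDimensional ℝ E]
  [MeasurableSpace E] {μ : Measure E} [IsFiniteMeasure μ]

theorem exists_integral_inner_pow_ne_zero (hμ : ∀ k : ℕ, MemLp id k μ)
    (h0 : ¬ ∀ᵐ θ ∂μ, θ = 0) : ∃ e : E, ∀ j, ∫ θ, ⟪θ, e⟫ ^ (2 * j) ∂μ ≠ 0 := by
  obtain ⟨e, he⟩ : ∃ e : E, ¬ ∀ᵐ θ ∂μ, ⟪θ, e⟫ = 0 := by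
    by_contra! hall
    refine h0 ?_
    filter_upwards [ae_all_iff.2 fun i => hall (stdOrthonormalBasis ℝ E i)] with θ hθ
    rw [← (stdOrthonormalBasis ℝ E).sum_repr θ]
    simp [OrthonormalBasis.repr_apply_apply, real_inner_comm, hθ]
  refine ⟨e, fun j hj => ?_⟩
  have hfi : Integrable (fun θ => ⟪θ, e⟫ ^ (2 * j)) μ := by
    have hinner : MemLp (fun θ => ⟪θ, e⟫) (2 * j : ℕ) μ := (hμ (2 * j)).inner_const e
    simpa only [Real.norm_eq_abs, (even_two_mul j).pow_abs] using hinner.integrable_norm_pow'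
  rw [integral_eq_zero_iff_of_nonneg (fun θ => (even_two_mul j).pow_nonneg _) hfi] at hj
  exact he (hj.mono fun θ hθ => eq_zero_of_pow_eq_zero hθ)

variable [BorelSpace E] [NormedAddCommGroup F] [NormedSpace ℂ F] [CompleteSpace F] {f : E → F}

theorem fourier_sum_smul_integral_comp_add_smul (hf : Integrable f) (c : ι → ℂ) (d : ι → ℝ)
    (w : E) :
    𝓕 (fun x => ∑ i, c i • ∫ θ, f (x + d i • θ) ∂μ) w =
      (∑ i, c i * charFun μ ((2 * π * d i) • w)) • 𝓕 f w := by
  have hfi (i : ι) : Integrable fun x => c i • ∫ θ, f (x + d i • θ) ∂μ :=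
    (integrable_integral_comp_add (by fun_prop) hf).smul (c i)
  have hfourier (i : ι) : 𝓕 (fun x => c i • ∫ θ, f (x + d i • θ) ∂μ) w =
      (c i * charFun μ ((2 * π * d i) • w)) • 𝓕 f w := by
    rw [mul_smul, mul_comm (2 * π), mul_smul (d i), ← charFun_map_smul,
      ← fourier_integral_comp_add (by fun_prop) hf]
    exact congrFun (VectorFourier.fourierIntegral_const_smul 𝐞 volume (innerₗ E) _ (c i)) w
  simp_rw [Finset.sum_smul, ← hfourier, Real.fourier_eq, Finset.smul_sum]
  exact integral_finsetSum _ fun i _ => (Real.fourierIntegral_convergent_iff w).2 (hfi i)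

theorem sum_mul_pow_eq_of_sum_integral_comp_add_smul_eq (hf : Integrable f) (hf0 : ∫ x, f x ≠ 0)
    {n : ℕ} (hμ : MemLp id n μ) {e : E} (he : ∫ θ, ⟪θ, e⟫ ^ n ∂μ ≠ 0)
    {c : ι → ℂ} {c' : ι' → ℂ} {d : ι → ℝ} {d' : ι' → ℝ}
    (h : ∀ x, ∑ i, c i • ∫ θ, f (x + d i • θ) ∂μ = ∑ i, c' i • ∫ θ, f (x + d' i • θ) ∂μ) :
    ∑ i, c i * (d i : ℂ) ^ n = ∑ i, c' i * (d' i : ℂ) ^ n := by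
  have hcharFun : ∀ᶠ w in 𝓝 (0 : E), ∑ i, c i * charFun μ ((2 * π * d i) • w) =
      ∑ i, c' i * charFun μ ((2 * π * d' i) • w) := by
    filter_upwards [eventually_fourier_ne_zero hf hf0] with w hw
    refine smul_left_injective ℂ hw ?_
    simp only [← fourier_sum_smul_integral_comp_add_smul hf, h]
  have hline : Tendsto (fun s : ℝ => ((2 * π)⁻¹ * s) • e) (𝓝 0) (𝓝 0) :=
    Continuous.tendsto' (by fun_prop) _ _ (by simp)
  have hcharFun_map (t s : ℝ) : charFun μ ((2 * π * t) • ((2 * π)⁻¹ * s) • e) =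
      charFun (μ.map fun θ => ⟪θ, e⟫) (t * s) := by
    rw [charFun_apply, charFun_apply_real, integral_map (by fun_prop) (by fun_prop), smul_smul]
    congr! 3 with θ
    rw [inner_smul_right]
    field_simp
    push_cast
    ring
  refine sum_mul_pow_eq_of_eventuallyEq_charFun (ν := μ.map fun θ => ⟪θ, e⟫) (n := n) ?_ ?_ ?_
  · exact (memLp_map_measure_iff (by fun_prop) (by fun_prop)).2 (hμ.inner_const e)
  · rwa [integral_map (by fun_prop) (by fun_prop)]
  · exact (hline.eventually hcharFun).mono fun s hs => by simpa only [hcharFun_map] using hs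

end Moments

section UnitSphere

open Module Metric

variable {E : Type*} [NormedAddCommGroup E] [InnerProductSpace ℝ E]

theorem closedHemisphere_subset_image_stereoInvFunAux {v : E} (hv : ‖v‖ = 1) :
    {θ : E | ‖θ‖ = 1 ∧ ⟪v, θ⟫ ≤ 0} ⊆
      (fun w : (ℝ ∙ v)ᗮ => stereoInvFunAux v (w : E)) '' closedBall 0 2 := by
  rintro θ ⟨hθ, hvθ⟩
  have hne : θ ≠ v := by
    rintro rfl
    rw [real_inner_self_eq_norm_sq, hθ] at hvθ
    norm_num at hvθ
  refine ⟨stereoToFun v θ, ?_, congrArg Subtype.val (stereo_left_inv hv (x := ⟨θ, by simpa⟩) hne)⟩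
  have hscale : |2 / (1 - ⟪v, θ⟫)| ≤ 2 := by
    rw [abs_of_nonneg (div_nonneg zero_le_two (by linarith))]
    exact div_le_self zero_le_two (by linarith)
  have hproj : ‖(ℝ ∙ v)ᗮ.orthogonalProjectionOnto θ‖ ≤ 1 :=
    hθ ▸ Submodule.norm_orthogonalProjectionOnto_apply_le _ θ
  rw [mem_closedBall_zero_iff, stereoToFun_apply, norm_smul, innerSL_apply_apply, Real.norm_eq_abs]
  simpa using mul_le_mul hscale hproj (norm_nonneg _) zero_le_two

theorem closedBall_subset_image_orthogonalProjectionOnto_sphere {v : E} (hv : ‖v‖ = 1) :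
    closedBall (0 : (ℝ ∙ v)ᗮ) 1 ⊆ (ℝ ∙ v)ᗮ.orthogonalProjectionOnto '' sphere (0 : E) 1 := by
  intro w hw
  rw [mem_closedBall_zero_iff] at hw
  have hwv : ⟪(w : E), v⟫ = 0 := Submodule.mem_orthogonal_singleton_iff_inner_left.mp w.2
  refine ⟨(w : E) + √(1 - ‖w‖ ^ 2) • v, ?_, ?_⟩
  · rw [mem_sphere_zero_iff_norm, ← sq_eq_sq₀ (norm_nonneg _) zero_le_one, norm_add_sq_real,
      inner_smul_right, hwv, norm_smul, hv, Real.norm_eq_abs, mul_one, sq_abs,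
      Real.sq_sqrt (by nlinarith [norm_nonneg w])]
    simp
  · simp [Submodule.orthogonalProjectionOnto_orthogonalComplement_singleton_eq_zero]

theorem finrank_orthogonal_span_singleton_cast [FiniteDimensional ℝ E] {v : E} (hv : v ≠ 0) :
    (finrank ℝ (ℝ ∙ v)ᗮ : ℝ) = finrank ℝ E - 1 := by
  have h := (ℝ ∙ v).finrank_add_finrank_orthogonal
  rw [finrank_span_singleton hv] at h
  rw [← h]
  push_cast
  ring

variable [MeasurableSpace E] [BorelSpace E]

theorem hausdorffMeasure_image_lt_top_of_contDiff {F : Type*} [NormedAddCommGroup F]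
    [NormedSpace ℝ F] [FiniteDimensional ℝ F] [MeasurableSpace F] [BorelSpace F] {f : F → E}
    (hf : ContDiff ℝ 1 f) {K : Set F} (hK : IsCompact K) : μH[(finrank ℝ F : ℝ)] (f '' K) < ⊤ := by
  obtain ⟨C, hC⟩ := hf.locallyLipschitz.locallyLipschitzOn.exists_lipschitzOnWith_of_compact hK
  refine (hC.hausdorffMeasure_image_le (Nat.cast_nonneg _)).trans_lt ?_
  exact ENNReal.mul_lt_top (by simp) hK.measure_lt_top

variable (E) in
/-- The surface measure on the unit sphere of `E`, as a measure on `E`: the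
`(dim E - 1)`-dimensional Hausdorff measure restricted to the sphere. -/
noncomputable def unitSphereMeasure : Measure E :=
  μH[(finrank ℝ E : ℝ) - 1].restrict (sphere 0 1)

theorem ae_norm_eq_one_unitSphereMeasure : ∀ᵐ θ ∂unitSphereMeasure E, ‖θ‖ = 1 := by
  filter_upwards [ae_restrict_mem isClosed_sphere.measurableSet] with θ hθ
  simpa using hθ

theorem measurePreserving_unitSphereMeasure (R : E ≃ₗᵢ[ℝ] E) :
    MeasurePreserving R (unitSphereMeasure E) (unitSphereMeasure E) := by
  have hR := (R.toIsometryEquiv.measurePreserving_hausdorffMeasure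
    ((finrank ℝ E : ℝ) - 1)).restrict_preimage
    (isClosed_sphere (x := (0 : E)) (ε := 1)).measurableSet
  rwa [show R.toIsometryEquiv ⁻¹' sphere (0 : E) 1 = sphere 0 1 by ext; simp] at hR

theorem integral_unitSphereMeasure_norm_add_smul_swap {F : Type*} [NormedAddCommGroup F]
    [NormedSpace ℝ F] (φ : ℝ → F) (x z : E) :
    ∫ θ, φ ‖z + ‖x‖ • θ‖ ∂unitSphereMeasure E = ∫ θ, φ ‖x + ‖z‖ • θ‖ ∂unitSphereMeasure E := by
  obtain ⟨R, hR⟩ : ∃ R : E ≃ₗᵢ[ℝ] E, R (‖x‖ • z) = ‖z‖ • x :=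
    ⟨_, Submodule.reflection_sub (by simp [norm_smul, mul_comm])⟩
  rw [← (measurePreserving_unitSphereMeasure R).integral_comp
    R.toHomeomorph.measurableEmbedding fun θ => φ ‖x + ‖z‖ • θ‖]
  refine integral_congr_ae (ae_norm_eq_one_unitSphereMeasure.mono fun θ hθ => congrArg φ ?_)
  have hinner : ‖z‖ * ⟪x, R θ⟫ = ‖x‖ * ⟪z, θ⟫ := by
    rw [← real_inner_smul_left, ← real_inner_smul_left, ← hR, R.inner_map_map]
  rw [← sq_eq_sq₀ (norm_nonneg _) (norm_nonneg _), norm_add_sq_real, norm_add_sq_real,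
    norm_smul, norm_smul, norm_norm, norm_norm, R.norm_map, inner_smul_right, inner_smul_right,
    hinner, hθ]
  ring

variable [FiniteDimensional ℝ E]

instance [Nontrivial E] : IsFiniteMeasure (unitSphereMeasure E) := by
  obtain ⟨v, hv⟩ := exists_norm_eq E zero_le_one
  have himage {u : E} (hu : ‖u‖ = 1) :
      μH[(finrank ℝ E : ℝ) - 1]
        ((fun w : (ℝ ∙ u)ᗮ => stereoInvFunAux u (w : E)) '' closedBall 0 2) < ⊤ := by
    rw [← finrank_orthogonal_span_singleton_cast (norm_ne_zero_iff.1 (hu ▸ one_ne_zero))]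
    exact hausdorffMeasure_image_lt_top_of_contDiff
      (contDiff_stereoInvFunAux.comp (ℝ ∙ u)ᗮ.subtypeL.contDiff) (isCompact_closedBall _ _)
  have hv' : ‖-v‖ = 1 := by rwa [norm_neg]
  refine ⟨?_⟩
  rw [unitSphereMeasure, Measure.restrict_apply_univ]
  refine (measure_mono fun θ hθ => ?_).trans_lt (measure_union_lt_top (himage hv) (himage hv'))
  rw [mem_sphere_zero_iff_norm] at hθ
  rcases le_total ⟪v, θ⟫ 0 with h | h
  · exact .inl (closedHemisphere_subset_image_stereoInvFunAux hv ⟨hθ, h⟩)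
  · exact .inr (closedHemisphere_subset_image_stereoInvFunAux hv'
      ⟨hθ, by rwa [inner_neg_left, neg_nonpos]⟩)

instance [Nontrivial E] : NeZero (unitSphereMeasure E) := by
  obtain ⟨v, hv⟩ := exists_norm_eq E zero_le_one
  have hlip : LipschitzWith 1 (ℝ ∙ v)ᗮ.orthogonalProjectionOnto :=
    (ℝ ∙ v)ᗮ.orthogonalProjectionOnto.lipschitzWith_of_opNorm_le
      (Submodule.orthogonalProjectionOnto_norm_le _)
  have hpos : 0 < μH[(finrank ℝ (ℝ ∙ v)ᗮ : ℝ)] (sphere (0 : E) 1) := by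
    calc 0 < μH[(finrank ℝ (ℝ ∙ v)ᗮ : ℝ)] (closedBall (0 : (ℝ ∙ v)ᗮ) 1) :=
          measure_closedBall_pos _ _ one_pos
      _ ≤ _ := measure_mono (closedBall_subset_image_orthogonalProjectionOnto_sphere hv)
      _ ≤ _ := hlip.hausdorffMeasure_image_le (Nat.cast_nonneg _) _
      _ = _ := by simp
  rw [finrank_orthogonal_span_singleton_cast (norm_ne_zero_iff.1 (hv ▸ one_ne_zero))] at hpos
  exact ⟨Measure.restrict_eq_zero.not.2 hpos.ne'⟩

theorem integrable_unitSphereMeasure_of_continuous [Nontrivial E] {F : Type*}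
    [NormedAddCommGroup F] {f : E → F} (hf : Continuous f) :
    Integrable f (unitSphereMeasure E) := by
  obtain ⟨C, hC⟩ := (isCompact_sphere (0 : E) 1).exists_bound_of_continuousOn hf.continuousOn
  refine .of_bound hf.aestronglyMeasurable C ?_
  filter_upwards [ae_norm_eq_one_unitSphereMeasure] with θ hθ
  exact hC θ (by simpa using hθ)

theorem memLp_id_unitSphereMeasure [Nontrivial E] (p : ENNReal) :
    MemLp id p (unitSphereMeasure E) :=
  MemLp.of_bound (by fun_prop) 1 (ae_norm_eq_one_unitSphereMeasure.mono fun _ hθ => hθ.le)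

theorem not_ae_eq_zero_unitSphereMeasure [Nontrivial E] : ¬ ∀ᵐ θ ∂unitSphereMeasure E, θ = 0 := by
  intro h
  obtain ⟨θ, hθ1, hθ0⟩ := (ae_norm_eq_one_unitSphereMeasure.and h).exists
  simp [hθ0] at hθ1

end UnitSphere

section Combinatorics

open Finset Function

variable {ι ι' : Type*} [Fintype ι] [Fintype ι']

theorem sum_mul_comp_eq_of_sum_mul_pow_eq {K : Type*} [Field K] {c s : ι → K} {c' s' : ι' → K}
    (h : ∀ j : ℕ, ∑ i, c i * s i ^ j = ∑ i, c' i * s' i ^ j) (φ : K → K) :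
    ∑ i, c i * φ (s i) = ∑ i, c' i * φ (s' i) := by
  classical
  have hpoly (p : Polynomial K) : ∑ i, c i * p.eval (s i) = ∑ i, c' i * p.eval (s' i) := by
    simp_rw [Polynomial.eval_eq_sum_range, mul_sum, mul_left_comm _ (p.coeff _)]
    rw [sum_comm, sum_comm (s := univ (α := ι'))]
    simp_rw [← mul_sum, h]
  set nodes : Finset K := univ.image s ∪ univ.image s'
  obtain ⟨p, hp⟩ : ∃ p : Polynomial K, ∀ u ∈ nodes, p.eval u = φ u :=
    ⟨Lagrange.interpolate nodes id φ, fun _ hu =>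
      Lagrange.eval_interpolate_at_node φ injective_id.injOn hu⟩
  calc ∑ i, c i * φ (s i) = ∑ i, c i * p.eval (s i) := by
        refine sum_congr rfl fun i _ => ?_
        rw [hp _ (mem_union_left _ (mem_image_of_mem s (mem_univ i)))]
    _ = ∑ i, c' i * p.eval (s' i) := hpoly p
    _ = ∑ i, c' i * φ (s' i) := by
        refine sum_congr rfl fun i _ => ?_
        rw [hp _ (mem_union_right _ (mem_image_of_mem s' (mem_univ i)))]

theorem exists_perm_of_sum_filter_eq {M S : Type*} [AddCommMonoid M] [DecidableEq S]
    {a a' : ι → M} {s s' : ι → S} (ha : ∀ k, a k ≠ 0) (hs : Injective s)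
    (h : ∀ r, ∑ k with s k = r, a k = ∑ k with s' k = r, a' k) :
    ∃ τ : Equiv.Perm ι, ∀ k, s' (τ k) = s k ∧ a' (τ k) = a k := by
  classical
  have hsum (k : ι) : ∑ l with s' l = s k, a' l = a k := by
    rw [← h, sum_filter]
    simp [hs.eq_iff]
  have hexists (k : ι) : ∃ l, s' l = s k := by
    obtain ⟨l, hl, -⟩ := exists_ne_zero_of_sum_ne_zero ((hsum k).trans_ne (ha k))
    exact ⟨l, (mem_filter.1 hl).2⟩
  choose τ hτ using hexists
  have hbij : Bijective τ := Finite.injective_iff_bijective.1 fun k l hkl =>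
    hs (by rw [← hτ k, ← hτ l, hkl])
  have hs' : Injective s' := by
    refine .of_comp_right ?_ hbij.surjective
    simpa only [comp_def, hτ] using hs
  refine ⟨.ofBijective τ hbij, fun k => ⟨hτ k, ?_⟩⟩
  rw [← hsum k, ← hτ k, sum_filter]
  simp [hs'.eq_iff]

theorem card_filter_not_injective_le {Y α : Type*} [DecidableEq α]
    (d : Y → ι → α) (Γ : Finset Y) {N : ℕ}
    (hΓ : ∀ k l, k ≠ l → #{y ∈ Γ | d y k = d y l} ≤ N) :
    #{y ∈ Γ | ¬ Injective (d y)} ≤ (Fintype.card ι).choose 2 * N := by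
  classical
  have hcover : {y ∈ Γ | ¬ Injective (d y)} ⊆
      (powersetCard 2 univ).biUnion fun p => {y ∈ Γ | ∀ k ∈ p, ∀ l ∈ p, d y k = d y l} := by
    intro y hy
    obtain ⟨hyΓ, hy⟩ := mem_filter.1 hy
    obtain ⟨k, l, hkl, hne⟩ := not_injective_iff.1 hy
    refine mem_biUnion.2 ⟨{k, l}, mem_powersetCard.2 ⟨subset_univ _, card_pair hne⟩, ?_⟩
    simp [hyΓ, hkl]
  refine (card_le_card hcover).trans ?_
  rw [← card_univ, ← card_powersetCard]
  refine card_biUnion_le_card_mul _ _ N fun p hp => ?_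
  obtain ⟨k, l, hne, rfl⟩ := card_eq_two.1 (mem_powersetCard.1 hp).2
  refine (card_le_card (monotone_filter_right _ fun y _ hy => ?_)).trans (hΓ k l hne)
  exact hy k (by simp) l (by simp)

variable {E : Type*} [NormedAddCommGroup E] [InnerProductSpace ℝ E]

theorem exists_norm_eq_one_forall_norm_sub_eq_norm_sub_iff {u v : E} (huv : u ≠ v) :
    ∃ (θ : E) (ρ : ℝ), ‖θ‖ = 1 ∧ ∀ y, ‖y - u‖ = ‖y - v‖ ↔ ⟪y, θ⟫ = ρ := by
  have hne : ‖u - v‖ ≠ 0 := norm_ne_zero_iff.2 (sub_ne_zero.2 huv)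
  refine ⟨‖u - v‖⁻¹ • (u - v), ‖u - v‖⁻¹ * ((‖u‖ ^ 2 - ‖v‖ ^ 2) / 2), ?_, fun y => ?_⟩
  · rw [norm_smul, norm_inv, norm_norm, inv_mul_cancel₀ hne]
  · rw [inner_smul_right, mul_right_inj' (inv_ne_zero hne), inner_sub_right,
      ← sq_eq_sq₀ (norm_nonneg _) (norm_nonneg _), norm_sub_sq_real, norm_sub_sq_real]
    constructor <;> intro h <;> linarith

theorem card_filter_norm_sub_eq_norm_sub_le {Γ : Finset E} {N : ℕ}
    (hΓ : ∀ (θ : E) (ρ : ℝ), ‖θ‖ = 1 → #{y ∈ Γ | ⟪y, θ⟫ = ρ} ≤ N) {u v : E} (huv : u ≠ v) :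
    #{y ∈ Γ | ‖y - u‖ = ‖y - v‖} ≤ N := by
  obtain ⟨θ, ρ, hθ, hiff⟩ := exists_norm_eq_one_forall_norm_sub_eq_norm_sub_iff huv
  simpa only [hiff] using hΓ θ ρ hθ

theorem lt_card_filter_injective_norm_sub {Γ : Finset E} {N : ℕ}
    (hΓ : ∀ (θ : E) (ρ : ℝ), ‖θ‖ = 1 → #{y ∈ Γ | ⟪y, θ⟫ = ρ} ≤ N)
    (hcard : (Fintype.card ι).choose 2 * N + N < #Γ) {x : ι → E} (hx : Injective x) :
    N < #{y ∈ Γ | Injective fun k => ‖y - x k‖} := by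
  have hbad := card_filter_not_injective_le (fun y k => ‖y - x k‖) Γ fun k l hkl =>
    card_filter_norm_sub_eq_norm_sub_le hΓ (hx.ne hkl)
  have hsplit := card_filter_add_card_filter_not (s := Γ) fun y => Injective fun k => ‖y - x k‖
  omega

end Combinatorics

section SphericalMean

open Finset Function

variable {E ι ι' : Type*} [NormedAddCommGroup E] [InnerProductSpace ℝ E] [FiniteDimensional ℝ E]
  [MeasurableSpace E] [BorelSpace E] [Fintype ι] [Fintype ι'] {g : ℝ → ℝ}

/-- The spherical mean transform of `f` at center `y` and radius `t`, without the factor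
`t ^ (dim E - 1)`. -/
noncomputable def sphericalMean (f : E → ℝ) (y : E) (t : ℝ) : ℝ :=
  ∫ θ, f (y + t • θ) ∂unitSphereMeasure E

variable [Nontrivial E]

theorem sphericalMean_sum_mul_norm_sub (hg : Continuous fun v : E => g ‖v‖) (b : ι → ℝ)
    (w : ι → E) (y z : E) :
    sphericalMean (fun v => ∑ i, b i * g ‖v - w i‖) y ‖z‖ =
      ∑ i, b i * ∫ θ, g ‖z + ‖y - w i‖ • θ‖ ∂unitSphereMeasure E := by
  have hfi (i : ι) :
      Integrable (fun θ => b i * g ‖y + ‖z‖ • θ - w i‖) (unitSphereMeasure E) :=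
    (integrable_unitSphereMeasure_of_continuous (hg.comp (by fun_prop))).const_mul (b i)
  rw [sphericalMean, integral_finsetSum _ fun i _ => hfi i]
  refine sum_congr rfl fun i _ => ?_
  rw [integral_const_mul, integral_unitSphereMeasure_norm_add_smul_swap g (y - w i) z]
  simp_rw [add_sub_right_comm]

theorem sum_filter_norm_sub_eq_of_sphericalMean_eq (hg : Continuous fun v : E => g ‖v‖)
    (hgi : Integrable fun v : E => g ‖v‖) (hg0 : ∫ v : E, g ‖v‖ ≠ 0) {b : ι → ℝ} {b' : ι' → ℝ}
    {w : ι → E} {w' : ι' → E} {y : E}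
    (h : ∀ t, 0 ≤ t → sphericalMean (fun v => ∑ i, b i * g ‖v - w i‖) y t =
      sphericalMean (fun v => ∑ i, b' i * g ‖v - w' i‖) y t) (r : ℝ) :
    ∑ i with ‖y - w i‖ = r, b i = ∑ i with ‖y - w' i‖ = r, b' i := by
  have hswap (z : E) :
      ∑ i, (b i : ℂ) • ∫ θ, (g ‖z + ‖y - w i‖ • θ‖ : ℂ) ∂unitSphereMeasure E =
        ∑ i, (b' i : ℂ) • ∫ θ, (g ‖z + ‖y - w' i‖ • θ‖ : ℂ) ∂unitSphereMeasure E := by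
    have hz := h ‖z‖ (norm_nonneg z)
    rw [sphericalMean_sum_mul_norm_sub hg, sphericalMean_sum_mul_norm_sub hg] at hz
    simp_rw [integral_complex_ofReal, smul_eq_mul]
    exact_mod_cast hz
  obtain ⟨e, he⟩ := exists_integral_inner_pow_ne_zero (fun k => memLp_id_unitSphereMeasure k)
    (not_ae_eq_zero_unitSphereMeasure (E := E))
  have hpow (j : ℕ) : ∑ i, b i * (‖y - w i‖ ^ 2) ^ j = ∑ i, b' i * (‖y - w' i‖ ^ 2) ^ j := by
    have hg_ne : ∫ v : E, (g ‖v‖ : ℂ) ≠ 0 := by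
      rwa [integral_complex_ofReal, Complex.ofReal_ne_zero]
    have hℂ := sum_mul_pow_eq_of_sum_integral_comp_add_smul_eq (f := fun v : E => (g ‖v‖ : ℂ))
      hgi.ofReal hg_ne (memLp_id_unitSphereMeasure _) (he j) hswap
    simp_rw [← pow_mul]
    exact_mod_cast hℂ
  simpa [sum_filter] using
    sum_mul_comp_eq_of_sum_mul_pow_eq hpow fun u => if √u = r then 1 else 0

theorem stmt2_general {N : ℕ} (hg : Continuous fun v : E => g ‖v‖)
    (hgi : Integrable fun v : E => g ‖v‖) (hg0 : ∫ v : E, g ‖v‖ ≠ 0)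
    {x x' : ι → E} {a a' : ι → ℝ} (hx : Injective x) (ha0 : ∀ k, a k ≠ 0) (ha' : Injective a')
    {Γ : Finset E} (hΓcard : (Fintype.card ι).choose 2 * N + N < #Γ)
    (hΓ : ∀ (θ : E) (ρ : ℝ), ‖θ‖ = 1 → #{y ∈ Γ | ⟪y, θ⟫ = ρ} ≤ N)
    (hdata : ∀ y ∈ Γ, ∀ t, 0 ≤ t → sphericalMean (fun v => ∑ k, a k * g ‖v - x k‖) y t =
      sphericalMean (fun v => ∑ k, a' k * g ‖v - x' k‖) y t) :
    ∃ σ : Equiv.Perm ι, ∀ k, x' k = x (σ k) ∧ a' k = a (σ k) := by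
  classical
  have hcard := lt_card_filter_injective_norm_sub hΓ hΓcard hx
  have hperm {y : E} (hy : y ∈ Γ ∧ Injective fun k => ‖y - x k‖) :
      ∃ τ : Equiv.Perm ι, ∀ k, ‖y - x' (τ k)‖ = ‖y - x k‖ ∧ a' (τ k) = a k :=
    exists_perm_of_sum_filter_eq ha0 hy.2
      (sum_filter_norm_sub_eq_of_sphericalMean_eq hg hgi hg0 (hdata y hy.1))
  obtain ⟨y₀, hy₀⟩ := card_pos.1 (N.zero_le.trans_lt hcard)
  obtain ⟨τ, hτ⟩ := hperm (mem_filter.1 hy₀)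
  have hnode (k : ι) : x k = x' (τ k) := by
    by_contra hne
    refine (hcard.trans_le (card_le_card (monotone_filter_right Γ fun y hyΓ hy => ?_))).not_ge
      (card_filter_norm_sub_eq_norm_sub_le hΓ hne)
    obtain ⟨τy, hτy⟩ := hperm ⟨hyΓ, hy⟩
    have hτ_eq : τy k = τ k := ha' ((hτy k).2.trans (hτ k).2.symm)
    rw [← hτ_eq, (hτy k).1]
  exact ⟨τ.symm, fun k => by simp [hnode, ← (hτ _).2]⟩

end SphericalMean

/-- Theorem 3.3 (uniqueness form): a function `f = ∑ aₖ g(‖· - xₖ‖)`, where the radial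
extension of `g` is a Schwartz function with nonzero integral, with pairwise distinct nodes
and pairwise distinct nonzero amplitudes, is uniquely determined by its spherical means
`∫_{S^{n-1}} f(y + tθ) dσ(θ)` over all radii `t ≥ 0`, with centers in a set `Γ` of
`n·m(m-1)/2 + n + 1` points, no `n + 1` of which lie on a common affine hyperplane. -/
theorem stmt2 (n m : ℕ) (hn : 2 ≤ n) (hm : 1 ≤ m)
    (g : ℝ → ℝ) (g₀ : SchwartzMap (EuclideanSpace ℝ (Fin n)) ℝ)
    (hg₀ : ∀ x, g₀ x = g ‖x‖)
    (hgint : (∫ x, g₀ x) ≠ 0)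
    (x x' : Fin m → EuclideanSpace ℝ (Fin n)) (a a' : Fin m → ℝ)
    (hx : Function.Injective x) (hx' : Function.Injective x')
    (ha0 : ∀ k, a k ≠ 0) (ha'0 : ∀ k, a' k ≠ 0)
    (ha : Function.Injective a) (ha' : Function.Injective a')
    (Γ : Finset (EuclideanSpace ℝ (Fin n)))
    (hΓcard : Γ.card = n * (m * (m - 1)) / 2 + n + 1)
    (hΓ : ∀ (θ : EuclideanSpace ℝ (Fin n)) (ρ : ℝ), ‖θ‖ = 1 →
      (Γ.filter (fun y => ⟪y, θ⟫ = ρ)).card ≤ n)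
    (hdata : ∀ y ∈ Γ, ∀ t : ℝ, 0 ≤ t →
      (∫ θ in Metric.sphere (0 : EuclideanSpace ℝ (Fin n)) 1,
          (∑ k, a k * g ‖y + t • θ - x k‖) ∂μH[(n : ℝ) - 1])
        = ∫ θ in Metric.sphere (0 : EuclideanSpace ℝ (Fin n)) 1,
          (∑ k, a' k * g ‖y + t • θ - x' k‖) ∂μH[(n : ℝ) - 1]) :
    ∃ σ : Equiv.Perm (Fin m), ∀ k, x' k = x (σ k) ∧ a' k = a (σ k) := by
  have : Nontrivial (Fin n) := Fin.nontrivial_iff_two_le.2 hn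
  have hg : ⇑g₀ = fun v => g ‖v‖ := funext hg₀
  refine stmt2_general (N := n) (g := g) (hg ▸ g₀.continuous) (hg ▸ g₀.integrable) (hg ▸ hgint)
    hx ha0 ha' ?_ hΓ (by simpa [sphericalMean, unitSphereMeasure] using hdata)
  rw [hΓcard, Fintype.card_fin, Nat.choose_two_right,
    Nat.mul_div_assoc _ (Nat.even_mul_pred_self m).two_dvd, mul_comm n]
  exact Nat.lt_succ_self _
end

section
/- Let n ≥ 1, m ≥ 1, let θ_1,…,θ_m be unit vectors in ℝ^n and ρ_1,…,ρ_m ∈ ℝ such that the hyperplanes H_k = {x : ⟨x,θ_k⟩ = ρ_k}, k = 1,…,m, are pairwise distinct as subsets of ℝ^n. Let Γ ⊆ ℝ^n be a finite set of at least n·m(m−1) + 2n + 1 distinct points such that no affine hyperplane of ℝ^n contains more than n points of Γ. Then there exist at least 2n+1 points y ∈ Γ satisfying |ρ_i − ⟨y,θ_i⟩| ≠ |ρ_j − ⟨y,θ_j⟩| for all i ≠ j, 1 ≤ i,j ≤ m. -/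
open scoped RealInnerProductSpace

/-!
The distances from `y` to `Hᵢ` and `Hⱼ` coincide exactly when `ρᵢ - ⟪y, θᵢ⟫ = ±(ρⱼ - ⟪y, θⱼ⟫)`, that
is, when `y` solves one of the linear equations `⟪y, θᵢ ∓ θⱼ⟫ = ρᵢ ∓ ρⱼ`. As `Hᵢ ≠ Hⱼ`, each of them
defines a hyperplane or the empty set, so every pair `{i, j}` excludes at most `2n` points of `Γ`.
-/

theorem card_le_card_filter_pairwise_ne_add {α β ι : Type*} [Fintype ι] [DecidableEq β]
    (s : Finset α) (f : ι → α → β) {c : ℕ}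
    [DecidablePred fun y => ∀ i j, i ≠ j → f i y ≠ f j y]
    (h : ∀ i j, i ≠ j → (s.filter fun y => f i y = f j y).card ≤ c) :
    s.card ≤ (s.filter fun y => ∀ i j, i ≠ j → f i y ≠ f j y).card
      + (Fintype.card ι).choose 2 * c := by
  classical
  let pairs := (Finset.univ : Finset ι).powersetCard 2
  let collisions (p : Finset ι) := s.filter fun y => ¬ Set.InjOn (f · y) p
  have collisions_card_le : ∀ p ∈ pairs, (collisions p).card ≤ c := by
    intro p hp
    obtain ⟨i, j, hij, rfl⟩ := Finset.card_eq_two.mp (Finset.mem_powersetCard.mp hp).2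
    simpa [collisions, Set.injOn_pair, hij] using h i j hij
  have filter_subset :
      (s.filter fun y => ¬ ∀ i j, i ≠ j → f i y ≠ f j y) ⊆ pairs.biUnion collisions := by
    intro y hy
    obtain ⟨hys, hy⟩ := Finset.mem_filter.mp hy
    push Not at hy
    obtain ⟨i, j, hij, heq⟩ := hy
    refine Finset.mem_biUnion.mpr ⟨{i, j}, ?_, Finset.mem_filter.mpr ⟨hys, ?_⟩⟩
    · exact Finset.mem_powersetCard.mpr ⟨Finset.subset_univ _, Finset.card_pair hij⟩
    · simpa [Set.injOn_pair, hij] using heq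
  calc s.card
      = (s.filter fun y => ∀ i j, i ≠ j → f i y ≠ f j y).card
          + (s.filter fun y => ¬ ∀ i j, i ≠ j → f i y ≠ f j y).card :=
        (Finset.card_filter_add_card_filter_not _).symm
    _ ≤ (s.filter fun y => ∀ i j, i ≠ j → f i y ≠ f j y).card + pairs.card * c := by
        gcongr
        exact (Finset.card_le_card filter_subset).trans
          (Finset.card_biUnion_le_card_mul _ _ _ collisions_card_le)
    _ = _ := by rw [Finset.card_powersetCard, Finset.card_univ]

section Hyperplanes

variable {E : Type*} [NormedAddCommGroup E] [InnerProductSpace ℝ E] {k : ℕ} {Γ : Finset E}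

theorem card_filter_inner_eq_le
    (hΓ : ∀ (η : E) (c : ℝ), η ≠ 0 → (Γ.filter fun y => ⟪y, η⟫ = c).card ≤ k)
    {η : E} {c : ℝ} (h : ¬ (η = 0 ∧ c = 0)) :
    (Γ.filter fun y => ⟪y, η⟫ = c).card ≤ k := by
  by_cases hη : η = 0
  · have hc : 0 ≠ c := fun hc => h ⟨hη, hc.symm⟩
    simp [hη, hc]
  · exact hΓ η c hη

theorem card_filter_abs_sub_inner_eq_le
    (hΓ : ∀ (η : E) (c : ℝ), η ≠ 0 → (Γ.filter fun y => ⟪y, η⟫ = c).card ≤ k)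
    {u v : E} {a b : ℝ} (h : {x : E | ⟪x, u⟫ = a} ≠ {x : E | ⟪x, v⟫ = b}) :
    (Γ.filter fun y => |a - ⟪y, u⟫| = |b - ⟪y, v⟫|).card ≤ 2 * k := by
  classical
  have sub_ne : ¬ (u - v = 0 ∧ a - b = 0) := by
    rintro ⟨huv, hab⟩
    exact h (by rw [sub_eq_zero.mp huv, sub_eq_zero.mp hab])
  have add_ne : ¬ (u + v = 0 ∧ a + b = 0) := by
    rintro ⟨huv, hab⟩
    apply h
    ext x
    simp [eq_neg_of_add_eq_zero_left huv, eq_neg_of_add_eq_zero_left hab]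
  have filter_subset : (Γ.filter fun y => |a - ⟪y, u⟫| = |b - ⟪y, v⟫|) ⊆
      (Γ.filter fun y => ⟪y, u - v⟫ = a - b) ∪ Γ.filter fun y => ⟪y, u + v⟫ = a + b := by
    rw [← Finset.filter_or]
    refine Finset.monotone_filter_right Γ fun y _ hy => (abs_eq_abs.mp hy).imp ?_ ?_ <;>
    · intro hy
      simp only [inner_sub_right, inner_add_right]
      linarith
  calc (Γ.filter fun y => |a - ⟪y, u⟫| = |b - ⟪y, v⟫|).card
      ≤ (Γ.filter fun y => ⟪y, u - v⟫ = a - b).card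
          + (Γ.filter fun y => ⟪y, u + v⟫ = a + b).card :=
        (Finset.card_le_card filter_subset).trans (Finset.card_union_le _ _)
    _ ≤ k + k := add_le_add (card_filter_inner_eq_le hΓ sub_ne) (card_filter_inner_eq_le hΓ add_ne)
    _ = 2 * k := (two_mul k).symm

theorem stmt15_general {ι : Type*} [Fintype ι] (θ : ι → E) (ρ : ι → ℝ)
    (hH : ∀ i j, i ≠ j → {x : E | ⟪x, θ i⟫ = ρ i} ≠ {x : E | ⟪x, θ j⟫ = ρ j})
    (hΓ : ∀ (η : E) (c : ℝ), η ≠ 0 → (Γ.filter fun y => ⟪y, η⟫ = c).card ≤ k)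
    [DecidablePred fun y => ∀ i j, i ≠ j → |ρ i - ⟪y, θ i⟫| ≠ |ρ j - ⟪y, θ j⟫|] :
    Γ.card ≤ (Γ.filter fun y =>
        ∀ i j, i ≠ j → |ρ i - ⟪y, θ i⟫| ≠ |ρ j - ⟪y, θ j⟫|).card
      + k * (Fintype.card ι * (Fintype.card ι - 1)) := by
  have choose_two_mul_two : (Fintype.card ι).choose 2 * 2 =
      Fintype.card ι * (Fintype.card ι - 1) := by
    rw [Nat.choose_two_right, Nat.div_mul_cancel (Nat.even_mul_pred_self _).two_dvd]
  have union_bound := card_le_card_filter_pairwise_ne_add Γ (fun i y => |ρ i - ⟪y, θ i⟫|)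
    fun i j hij => card_filter_abs_sub_inner_eq_le hΓ (hH i j hij)
  rwa [← mul_assoc, choose_two_mul_two, mul_comm _ k] at union_bound

end Hyperplanes

/-- If `Γ` has at least `n·m(m-1) + 2n + 1` points and no affine hyperplane contains more
than `n` of them, then at least `2n + 1` points of `Γ` have pairwise distinct distances to
the pairwise distinct hyperplanes `Hₖ = {⟨x,θₖ⟩ = ρₖ}`. -/
theorem stmt15 (n m : ℕ) (hn : 1 ≤ n) (hm : 1 ≤ m)
    (θ : Fin m → EuclideanSpace ℝ (Fin n)) (ρ : Fin m → ℝ)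
    (hθ : ∀ k, ‖θ k‖ = 1)
    (hH : ∀ i j : Fin m, i ≠ j →
      {x : EuclideanSpace ℝ (Fin n) | ⟪x, θ i⟫ = ρ i}
        ≠ {x : EuclideanSpace ℝ (Fin n) | ⟪x, θ j⟫ = ρ j})
    (Γ : Finset (EuclideanSpace ℝ (Fin n)))
    (hΓcard : n * (m * (m - 1)) + 2 * n + 1 ≤ Γ.card)
    (hΓ : ∀ (η : EuclideanSpace ℝ (Fin n)) (c : ℝ), η ≠ 0 →
      (Γ.filter (fun y => ⟪y, η⟫ = c)).card ≤ n) :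
    2 * n + 1 ≤ (Γ.filter (fun y =>
      ∀ i j : Fin m, i ≠ j → |ρ i - ⟪y, θ i⟫| ≠ |ρ j - ⟪y, θ j⟫|)).card := by
  have card_le := Fintype.card_fin m ▸ stmt15_general θ ρ hH hΓ
  omega
end
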